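/- arXiv:1912.06541 — 2 statements merged into one kernel-verified Lean document; each statement's English description precedes it below -/
import Mathlib

section
/- Assume ν is infinitesimally invariant for N₀, i.e. ∫_H N₀φ dν = 0 for every cylinder function φ, and assume N₀ is symmetric on cylinder functions, i.e. ∫_H ψ N₀φ dν = ∫_H φ N₀ψ dν for all cylinder functions φ, ψ. Then for all cylinder functions φ(x) = f(⟨x,e_1⟩,…,⟨x,e_n⟩) and ψ(x) = g(⟨x,e_1⟩,…,⟨x,e_m⟩) one has ∫_H ψ N₀φ dν = −(1/2) ∫_H Σ_i q_i ∂_i f(⟨x,e_1⟩,…,⟨x,e_n⟩) ∂_i g(⟨x,e_1⟩,…,⟨x,e_m⟩) ν(dx), where ∂_i f := 0 for i > n and ∂_i g := 0 for i > m. -/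
open MeasureTheory
open scoped InnerProductSpace BigOperators

/-- The coordinate map `x ↦ (⟪x, e 1⟫, …, ⟪x, e n⟫)` of a cylinder function. -/
noncomputable def coords {H : Type*} [NormedAddCommGroup H] [InnerProductSpace ℝ H]
    (e : ℕ → H) (n : ℕ) (x : H) : Fin n → ℝ :=
  fun i => ⟪x, e i.1⟫_ℝ

/-- The `i`-th partial derivative of `f : ℝⁿ → ℝ`. -/
noncomputable def pd {n : ℕ} (f : (Fin n → ℝ) → ℝ) (i : Fin n) (y : Fin n → ℝ) : ℝ :=
  fderiv ℝ f y (Pi.single i 1)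

/-- The second partial derivative `∂_{ii} f` of `f : ℝⁿ → ℝ`. -/
noncomputable def pd2 {n : ℕ} (f : (Fin n → ℝ) → ℝ) (i : Fin n) (y : Fin n → ℝ) : ℝ :=
  fderiv ℝ (fun z => pd f i z) y (Pi.single i 1)

/-- `f ∈ C_b²(ℝⁿ)`: twice continuously differentiable with bounded derivatives
up to order 2. -/
def CbTwo {n : ℕ} (f : (Fin n → ℝ) → ℝ) : Prop :=
  ContDiff ℝ 2 f ∧ ∀ k : ℕ, k ≤ 2 → ∃ C : ℝ, ∀ y, ‖iteratedFDeriv ℝ k f y‖ ≤ C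

/-- The Kolmogorov operator `N₀` applied to the cylinder function
`φ(x) = f(⟪x,e 1⟫, …, ⟪x,e n⟫)`:
`N₀φ(x) = (1/2) Σ_i q_i ∂_{ii} f + Σ_i a_i(x) ∂_i f`. -/
noncomputable def KolmN0 {H : Type*} [NormedAddCommGroup H] [InnerProductSpace ℝ H]
    (e : ℕ → H) (q : ℕ → ℝ) (a : ℕ → H → ℝ) {n : ℕ}
    (f : (Fin n → ℝ) → ℝ) (x : H) : ℝ :=
  (1/2) * ∑ i : Fin n, q i.1 * pd2 f i (coords e n x)
    + ∑ i : Fin n, a i.1 x * pd f i (coords e n x)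


/-- The `i`-th partial derivative of `f : ℝⁿ → ℝ`, extended by `0` for `i ≥ n`. -/
noncomputable def pdext {n : ℕ} (f : (Fin n → ℝ) → ℝ) (i : ℕ) (y : Fin n → ℝ) : ℝ :=
  if h : i < n then pd f ⟨i, h⟩ y else 0

/-!
The operator `N₀` is second order without zeroth-order term, so it satisfies the Leibniz rule
`N₀(φψ) = φ N₀ψ + ψ N₀φ + Γ(φ, ψ)`, where `Γ(φ, ψ) = Σ_i q_i ∂_i φ ∂_i ψ`. The product `φψ` is
again a cylinder function, so invariance makes the left side integrate to `0`, and by symmetry the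
first two terms on the right have the same integral.
-/

/-- The function `f` of `n` variables read as a function of `k` variables, the `i`-th variable of
`f` being the `σ i`-th new one. With `σ = Fin.castLE h` this views a cylinder function based on
`e 0, …, e (n - 1)` as one based on `e 0, …, e (k - 1)`. -/
def reindex {n k : ℕ} (σ : Fin n → Fin k) (f : (Fin n → ℝ) → ℝ) : (Fin k → ℝ) → ℝ :=
  fun y => f (y ∘ σ)

/-- The carré du champ `Γ(φ, ψ) = ⟪Q^{1/2} Dφ, Q^{1/2} Dψ⟫` of the cylinder functions
`φ = f ∘ coords e n` and `ψ = g ∘ coords e m`. The sum has finitely many nonzero terms. -/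
noncomputable def carreDuChamp {H : Type*} [NormedAddCommGroup H] [InnerProductSpace ℝ H]
    (e : ℕ → H) (q : ℕ → ℝ) {n m : ℕ} (f : (Fin n → ℝ) → ℝ) (g : (Fin m → ℝ) → ℝ) (x : H) : ℝ :=
  ∑' i : ℕ, q i * pdext f i (coords e n x) * pdext g i (coords e m x)

section PartialDerivatives

variable {n k : ℕ} {f g : (Fin n → ℝ) → ℝ}

theorem pd2_eq_pd_pd (f : (Fin n → ℝ) → ℝ) (i : Fin n) : pd2 f i = pd (pd f i) i := rfl

theorem contDiff_pd {r s : WithTop ℕ∞} (hf : ContDiff ℝ r f) (hsr : s + 1 ≤ r) (i : Fin n) :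
    ContDiff ℝ s (pd f i) :=
  (hf.fderiv_right hsr).clm_apply contDiff_const

theorem continuous_pd (hf : ContDiff ℝ 1 f) (i : Fin n) : Continuous (pd f i) :=
  (contDiff_pd hf (zero_add 1).le i).continuous

theorem continuous_pd2 (hf : ContDiff ℝ 2 f) (i : Fin n) : Continuous (pd2 f i) :=
  continuous_pd (contDiff_pd hf one_add_one_eq_two.le i) i

theorem pd_add (hf : Differentiable ℝ f) (hg : Differentiable ℝ g) (i : Fin n) :
    pd (f + g) i = pd f i + pd g i := by
  ext y
  simp [pd, fderiv_add (hf y) (hg y)]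

theorem pd_mul (hf : Differentiable ℝ f) (hg : Differentiable ℝ g) (i : Fin n) :
    pd (f * g) i = f * pd g i + g * pd f i := by
  ext y
  simp [pd, fderiv_mul (hf y) (hg y)]

theorem pd2_mul (hf : ContDiff ℝ 2 f) (hg : ContDiff ℝ 2 g) (i : Fin n) :
    pd2 (f * g) i = f * pd2 g i + g * pd2 f i + 2 * (pd f i * pd g i) := by
  have df := hf.differentiable two_ne_zero
  have dg := hg.differentiable two_ne_zero
  have dpf := (contDiff_pd hf one_add_one_eq_two.le i).differentiable one_ne_zero
  have dpg := (contDiff_pd hg one_add_one_eq_two.le i).differentiable one_ne_zero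
  simp only [pd2_eq_pd_pd]
  rw [pd_mul df dg, pd_add (df.mul dpg) (dg.mul dpf), pd_mul df dpg, pd_mul dg dpf]
  ring

theorem norm_pd_le (f : (Fin n → ℝ) → ℝ) (i : Fin n) (y : Fin n → ℝ) :
    ‖pd f i y‖ ≤ ‖iteratedFDeriv ℝ 1 f y‖ := by
  simpa [pd, norm_iteratedFDeriv_one, Pi.norm_single] using
    (fderiv ℝ f y).le_opNorm (Pi.single i 1)

theorem pd2_eq_iteratedFDeriv (hf : ContDiff ℝ 2 f) (i : Fin n) (y : Fin n → ℝ) :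
    pd2 f i y = iteratedFDeriv ℝ 2 f y fun _ => Pi.single i 1 := by
  have hd : DifferentiableAt ℝ (fderiv ℝ f) y :=
    (hf.fderiv_right one_add_one_eq_two.le).differentiable one_ne_zero y
  simp [pd2, pd, iteratedFDeriv_two_apply, fderiv_clm_apply hd (differentiableAt_const _)]

theorem norm_pd2_le (hf : ContDiff ℝ 2 f) (i : Fin n) (y : Fin n → ℝ) :
    ‖pd2 f i y‖ ≤ ‖iteratedFDeriv ℝ 2 f y‖ := by
  simpa [pd2_eq_iteratedFDeriv hf, Pi.norm_single] using
    (iteratedFDeriv ℝ 2 f y).le_opNorm fun _ => Pi.single i 1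

theorem pd_reindex (σ : Fin n → Fin k) (hf : Differentiable ℝ f) (i : Fin k) (y : Fin k → ℝ) :
    pd (reindex σ f) i y = fderiv ℝ f (y ∘ σ) (Pi.single i 1 ∘ σ) := by
  have h := (hf (y ∘ σ)).hasFDerivAt.comp y (Pi.compRightL ℝ (fun _ => ℝ) σ).hasFDerivAt
  exact DFunLike.congr_fun h.fderiv (Pi.single i 1)

theorem pd_reindex_apply {σ : Fin n → Fin k} (hσ : σ.Injective) (hf : Differentiable ℝ f)
    (i : Fin n) : pd (reindex σ f) (σ i) = reindex σ (pd f i) := by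
  have h : (Pi.single (σ i) 1 : Fin k → ℝ) ∘ σ = Pi.single i 1 := by
    ext j
    simp [Pi.single_apply, hσ.eq_iff]
  ext y
  rw [pd_reindex σ hf, h]
  rfl

theorem pd_reindex_of_notMem_range {σ : Fin n → Fin k} (hf : Differentiable ℝ f) {i : Fin k}
    (hi : i ∉ Set.range σ) : pd (reindex σ f) i = 0 := by
  have h : (Pi.single i 1 : Fin k → ℝ) ∘ σ = 0 := by
    ext j
    exact Pi.single_eq_of_ne (fun hj => hi ⟨j, hj⟩) 1
  ext y
  rw [pd_reindex σ hf, h, map_zero, Pi.zero_apply]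

theorem pd2_reindex_apply {σ : Fin n → Fin k} (hσ : σ.Injective) (hf : ContDiff ℝ 2 f)
    (i : Fin n) : pd2 (reindex σ f) (σ i) = reindex σ (pd2 f i) := by
  have df := hf.differentiable two_ne_zero
  have dpf := (contDiff_pd hf one_add_one_eq_two.le i).differentiable one_ne_zero
  rw [pd2_eq_pd_pd, pd_reindex_apply hσ df, pd_reindex_apply hσ dpf, pd2_eq_pd_pd]

theorem pd2_reindex_of_notMem_range {σ : Fin n → Fin k} (hf : Differentiable ℝ f) {i : Fin k}
    (hi : i ∉ Set.range σ) : pd2 (reindex σ f) i = 0 := by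
  ext y
  simp [pd2_eq_pd_pd, pd_reindex_of_notMem_range hf hi, pd]

theorem pdext_apply_fin (f : (Fin n → ℝ) → ℝ) (i : Fin n) : pdext f i = pd f i := by
  ext y
  simp [pdext]

theorem pdext_of_le (f : (Fin n → ℝ) → ℝ) {i : ℕ} (hi : n ≤ i) : pdext f i = 0 := by
  ext y
  simp [pdext, hi]

theorem pdext_reindex_castLE (h : n ≤ k) (hf : Differentiable ℝ f) (i : ℕ) :
    pdext (reindex (Fin.castLE h) f) i = reindex (Fin.castLE h) (pdext f i) := by
  rcases lt_or_ge i n with hin | hni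
  · lift i to Fin n using hin
    rw [pdext_apply_fin, ← pd_reindex_apply (Fin.castLE_injective h) hf]
    exact pdext_apply_fin _ (Fin.castLE h i)
  · rw [pdext_of_le f hni]
    rcases lt_or_ge i k with hik | hki
    · lift i to Fin k using hik
      rw [pdext_apply_fin, pd_reindex_of_notMem_range hf (by simpa [Fin.range_castLE] using hni)]
      rfl
    · exact pdext_of_le _ hki

end PartialDerivatives

section CbTwo

variable {n k : ℕ} {f g : (Fin n → ℝ) → ℝ}

theorem CbTwo.exists_bound (hf : CbTwo f) :
    ∃ C : ℝ, ∀ j ≤ 2, ∀ y, ‖iteratedFDeriv ℝ j f y‖ ≤ C := by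
  have h : ∀ᶠ C : ℝ in Filter.atTop, ∀ j ∈ Set.Iic 2, ∀ y, ‖iteratedFDeriv ℝ j f y‖ ≤ C := by
    refine (Set.finite_Iic 2).eventually_all.2 fun j hj => ?_
    obtain ⟨C, hC⟩ := hf.2 j hj
    filter_upwards [Filter.eventually_ge_atTop C] with D hD y using (hC y).trans hD
  exact h.exists

theorem CbTwo.exists_norm_le (hf : CbTwo f) : ∃ C, ∀ y, ‖f y‖ ≤ C := by
  simpa using hf.2 0 zero_le_two

theorem CbTwo.exists_norm_pd_le (hf : CbTwo f) (i : Fin n) : ∃ C, ∀ y, ‖pd f i y‖ ≤ C :=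
  (hf.2 1 one_le_two).imp fun _ hC y => (norm_pd_le f i y).trans (hC y)

theorem CbTwo.exists_norm_pd2_le (hf : CbTwo f) (i : Fin n) : ∃ C, ∀ y, ‖pd2 f i y‖ ≤ C :=
  (hf.2 2 le_rfl).imp fun _ hC y => (norm_pd2_le hf.1 i y).trans (hC y)

theorem CbTwo.mul (hf : CbTwo f) (hg : CbTwo g) : CbTwo (f * g) := by
  obtain ⟨A, hA⟩ := hf.exists_bound
  obtain ⟨B, hB⟩ := hg.exists_bound
  have hA₀ : 0 ≤ A := (norm_nonneg _).trans (hA 0 zero_le_two 0)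
  refine ⟨hf.1.mul hg.1, fun j hj => ⟨∑ i ∈ Finset.range (j + 1), j.choose i * A * B, fun y => ?_⟩⟩
  refine (norm_iteratedFDeriv_mul_le hf.1 hg.1 y (by exact_mod_cast hj)).trans ?_
  refine Finset.sum_le_sum fun i hi => ?_
  have hij : i ≤ j := Nat.lt_succ_iff.1 (Finset.mem_range.1 hi)
  gcongr
  · exact hA i (hij.trans hj) y
  · exact hB (j - i) ((Nat.sub_le j i).trans hj) y

theorem CbTwo.comp_continuousLinearMap (hf : CbTwo f) (L : (Fin k → ℝ) →L[ℝ] (Fin n → ℝ)) :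
    CbTwo (f ∘ L) := by
  refine ⟨hf.1.comp L.contDiff, fun j hj => ?_⟩
  obtain ⟨C, hC⟩ := hf.2 j hj
  refine ⟨C * ∏ _i : Fin j, ‖L‖, fun y => ?_⟩
  rw [L.iteratedFDeriv_comp_right hf.1 y (by exact_mod_cast hj)]
  refine (ContinuousMultilinearMap.norm_compContinuousLinearMap_le _ _).trans ?_
  gcongr
  exact hC (L y)

theorem CbTwo.reindex (hf : CbTwo f) (σ : Fin n → Fin k) : CbTwo (reindex σ f) :=
  hf.comp_continuousLinearMap (Pi.compRightL ℝ (fun _ => ℝ) σ)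

end CbTwo

section Kolmogorov

variable {H : Type*} [NormedAddCommGroup H] [InnerProductSpace ℝ H]
  (e : ℕ → H) (q : ℕ → ℝ) (a : ℕ → H → ℝ) {n m k : ℕ}

theorem continuous_coords (n : ℕ) : Continuous (coords e n) := by
  unfold coords
  fun_prop

theorem reindex_castLE_coords (h : n ≤ k) (f : (Fin n → ℝ) → ℝ) (x : H) :
    reindex (Fin.castLE h) f (coords e k x) = f (coords e n x) := rfl

theorem carreDuChamp_eq_sum (f g : (Fin k → ℝ) → ℝ) (x : H) :
    carreDuChamp e q f g x =
      ∑ i : Fin k, q i * pd f i (coords e k x) * pd g i (coords e k x) := by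
  have h_support :
      (Function.support fun i => q i * pdext f i (coords e k x) * pdext g i (coords e k x)) ⊆
        Set.range (Fin.val (n := k)) := by
    refine Function.support_subset_iff'.2 fun i hi => ?_
    rw [pdext_of_le f (by simpa using hi), Pi.zero_apply, mul_zero, zero_mul]
  rw [carreDuChamp, ← Fin.val_injective.tsum_eq h_support, tsum_fintype]
  simp only [pdext_apply_fin]

theorem carreDuChamp_reindex_castLE (hn : n ≤ k) (hm : m ≤ k)
    {f : (Fin n → ℝ) → ℝ} {g : (Fin m → ℝ) → ℝ}
    (hf : Differentiable ℝ f) (hg : Differentiable ℝ g) (x : H) :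
    carreDuChamp e q (reindex (Fin.castLE hn) f) (reindex (Fin.castLE hm) g) x =
      carreDuChamp e q f g x := by
  simp only [carreDuChamp, pdext_reindex_castLE hn hf, pdext_reindex_castLE hm hg,
    reindex_castLE_coords]

theorem kolmN0_reindex_castLE (h : n ≤ k) {f : (Fin n → ℝ) → ℝ} (hf : ContDiff ℝ 2 f) (x : H) :
    KolmN0 e q a (reindex (Fin.castLE h) f) x = KolmN0 e q a f x := by
  have df := hf.differentiable two_ne_zero
  have hσ := Fin.castLE_injective h
  have h_second : ∑ i : Fin n, q i * pd2 f i (coords e n x) =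
      ∑ i : Fin k, q i * pd2 (reindex (Fin.castLE h) f) i (coords e k x) := by
    refine Fintype.sum_of_injective (Fin.castLE h) hσ _ _ (fun i hi => ?_) fun i => ?_
    · rw [pd2_reindex_of_notMem_range df hi, Pi.zero_apply, mul_zero]
    · rw [pd2_reindex_apply hσ hf, reindex_castLE_coords, Fin.val_castLE]
  have h_first : ∑ i : Fin n, a i x * pd f i (coords e n x) =
      ∑ i : Fin k, a i x * pd (reindex (Fin.castLE h) f) i (coords e k x) := by
    refine Fintype.sum_of_injective (Fin.castLE h) hσ _ _ (fun i hi => ?_) fun i => ?_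
    · rw [pd_reindex_of_notMem_range df hi, Pi.zero_apply, mul_zero]
    · rw [pd_reindex_apply hσ df, reindex_castLE_coords, Fin.val_castLE]
  rw [KolmN0, KolmN0, h_second, h_first]

theorem kolmN0_mul {f g : (Fin k → ℝ) → ℝ} (hf : ContDiff ℝ 2 f) (hg : ContDiff ℝ 2 g) (x : H) :
    KolmN0 e q a (f * g) x =
      f (coords e k x) * KolmN0 e q a g x + g (coords e k x) * KolmN0 e q a f x +
        carreDuChamp e q f g x := by
  have df := hf.differentiable two_ne_zero
  have dg := hg.differentiable two_ne_zero
  simp only [carreDuChamp_eq_sum, KolmN0, pd2_mul hf hg, pd_mul df dg, Pi.add_apply, Pi.mul_apply,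
    Pi.ofNat_apply, mul_add, Finset.mul_sum, ← Finset.sum_add_distrib]
  refine Finset.sum_congr rfl fun i _ => ?_
  ring

theorem carreDuChamp_eq_kolmN0 (hn : n ≤ k) (hm : m ≤ k)
    {f : (Fin n → ℝ) → ℝ} {g : (Fin m → ℝ) → ℝ}
    (hf : ContDiff ℝ 2 f) (hg : ContDiff ℝ 2 g) (x : H) :
    carreDuChamp e q f g x =
      KolmN0 e q a (reindex (Fin.castLE hn) f * reindex (Fin.castLE hm) g) x -
        (f (coords e n x) * KolmN0 e q a g x + g (coords e m x) * KolmN0 e q a f x) := by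
  have hF : ContDiff ℝ 2 (reindex (Fin.castLE hn) f) :=
    hf.comp (Pi.compRightL ℝ (fun _ => ℝ) (Fin.castLE hn)).contDiff
  have hG : ContDiff ℝ 2 (reindex (Fin.castLE hm) g) :=
    hg.comp (Pi.compRightL ℝ (fun _ => ℝ) (Fin.castLE hm)).contDiff
  rw [kolmN0_mul e q a hF hG, kolmN0_reindex_castLE e q a hn hf, kolmN0_reindex_castLE e q a hm hg,
    carreDuChamp_reindex_castLE e q hn hm (hf.differentiable two_ne_zero)
      (hg.differentiable two_ne_zero), reindex_castLE_coords, reindex_castLE_coords,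
    add_sub_cancel_left]

variable [MeasurableSpace H] [OpensMeasurableSpace H] {ν : Measure H}

theorem integrable_comp_coords_mul {u : (Fin k → ℝ) → ℝ} (hu : Continuous u)
    (hb : ∃ C, ∀ y, ‖u y‖ ≤ C) {v : H → ℝ} (hv : Integrable v ν) :
    Integrable (fun x => u (coords e k x) * v x) ν := by
  obtain ⟨C, hC⟩ := hb
  exact hv.bdd_mul (hu.comp (continuous_coords e k)).aestronglyMeasurable
    (Filter.Eventually.of_forall fun x => hC (coords e k x))

variable [IsFiniteMeasure ν] {a}

theorem integrable_kolmN0 (ha : ∀ i, Integrable (a i) ν) {f : (Fin k → ℝ) → ℝ} (hf : CbTwo f) :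
    Integrable (KolmN0 e q a f) ν := by
  refine .add (.const_mul (integrable_finsetSum _ fun i _ => .const_mul ?_ _) _)
    (integrable_finsetSum _ fun i _ => ?_)
  · simpa only [mul_one] using integrable_comp_coords_mul e (continuous_pd2 hf.1 i)
      (hf.exists_norm_pd2_le i) (integrable_const (1 : ℝ))
  · have h_pd := continuous_pd (hf.1.of_le one_le_two) i
    simpa only [mul_comm] using integrable_comp_coords_mul e h_pd (hf.exists_norm_pd_le i) (ha i)

theorem integral_carreDuChamp (ha : ∀ i, Integrable (a i) ν) (hn : n ≤ k) (hm : m ≤ k)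
    {f : (Fin n → ℝ) → ℝ} {g : (Fin m → ℝ) → ℝ} (hf : CbTwo f) (hg : CbTwo g) :
    ∫ x, carreDuChamp e q f g x ∂ν =
      ∫ x, KolmN0 e q a (reindex (Fin.castLE hn) f * reindex (Fin.castLE hm) g) x ∂ν -
        (∫ x, f (coords e n x) * KolmN0 e q a g x ∂ν +
          ∫ x, g (coords e m x) * KolmN0 e q a f x ∂ν) := by
  have h_fg := integrable_kolmN0 e q ha ((hf.reindex (Fin.castLE hn)).mul
    (hg.reindex (Fin.castLE hm)))
  have h_f_Ng := integrable_comp_coords_mul e hf.1.continuous hf.exists_norm_le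
    (integrable_kolmN0 e q ha hg)
  have h_g_Nf := integrable_comp_coords_mul e hg.1.continuous hg.exists_norm_le
    (integrable_kolmN0 e q ha hf)
  simp only [carreDuChamp_eq_kolmN0 e q a hn hm hf.1 hg.1]
  rw [integral_sub h_fg (h_f_Ng.fun_add h_g_Nf), integral_add h_f_Ng h_g_Nf]

end Kolmogorov

theorem symmetric_integration_by_parts_general
    {H : Type*} [NormedAddCommGroup H] [InnerProductSpace ℝ H]
    [MeasurableSpace H] [OpensMeasurableSpace H]
    (ν : Measure H) [IsFiniteMeasure ν]
    (e : ℕ → H) (q : ℕ → ℝ)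
    (a : ℕ → H → ℝ) (ha : ∀ i, Integrable (a i) ν)
    (hinv : ∀ (n : ℕ), 1 ≤ n → ∀ f : (Fin n → ℝ) → ℝ, CbTwo f →
      ∫ x, KolmN0 e q a f x ∂ν = 0)
    (hsym : ∀ (n : ℕ), 1 ≤ n → ∀ f : (Fin n → ℝ) → ℝ, CbTwo f →
      ∀ (m : ℕ), 1 ≤ m → ∀ g : (Fin m → ℝ) → ℝ, CbTwo g →
      ∫ x, g (coords e m x) * KolmN0 e q a f x ∂ν
        = ∫ x, f (coords e n x) * KolmN0 e q a g x ∂ν)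
    (n : ℕ) (hn : 1 ≤ n) (f : (Fin n → ℝ) → ℝ) (hf : CbTwo f)
    (m : ℕ) (hm : 1 ≤ m) (g : (Fin m → ℝ) → ℝ) (hg : CbTwo g) :
    ∫ x, g (coords e m x) * KolmN0 e q a f x ∂ν
      = -(1/2) * ∫ x, carreDuChamp e q f g x ∂ν := by
  have hnk : n ≤ max n m := le_max_left n m
  have hmk : m ≤ max n m := le_max_right n m
  have h_inv := hinv (max n m) (hn.trans hnk) _
    ((hf.reindex (Fin.castLE hnk)).mul (hg.reindex (Fin.castLE hmk)))
  rw [integral_carreDuChamp e q ha hnk hmk hf hg, h_inv, ← hsym n hn f hf m hm g hg]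
  ring

/-- If `ν` is infinitesimally invariant for `N₀` and `N₀` is symmetric on
cylinder functions, then for all cylinder functions `φ, ψ` one has
`∫ ψ N₀φ dν = −(1/2) ∫ Σ_i q_i ∂_i f ∂_i g dν`. -/
theorem symmetric_integration_by_parts
    {H : Type*} [NormedAddCommGroup H] [InnerProductSpace ℝ H]
    [MeasurableSpace H] [BorelSpace H] [SecondCountableTopology H]
    (ν : Measure H) [IsProbabilityMeasure ν]
    (e : ℕ → H) (he : Orthonormal ℝ e)
    (q : ℕ → ℝ) (hq : ∀ i, 0 < q i)
    (a : ℕ → H → ℝ) (ha : ∀ i, Measurable (a i))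
    (ha2 : ∀ i, Integrable (fun x => (a i x) ^ 2) ν)
    (hinv : ∀ (n : ℕ), 1 ≤ n → ∀ f : (Fin n → ℝ) → ℝ, CbTwo f →
      ∫ x, KolmN0 e q a f x ∂ν = 0)
    (hsym : ∀ (n : ℕ), 1 ≤ n → ∀ f : (Fin n → ℝ) → ℝ, CbTwo f →
      ∀ (m : ℕ), 1 ≤ m → ∀ g : (Fin m → ℝ) → ℝ, CbTwo g →
      ∫ x, g (coords e m x) * KolmN0 e q a f x ∂ν
        = ∫ x, f (coords e n x) * KolmN0 e q a g x ∂ν)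
    (n : ℕ) (hn : 1 ≤ n) (f : (Fin n → ℝ) → ℝ) (hf : CbTwo f)
    (m : ℕ) (hm : 1 ≤ m) (g : (Fin m → ℝ) → ℝ) (hg : CbTwo g) :
    ∫ x, g (coords e m x) * KolmN0 e q a f x ∂ν
      = -(1/2) * ∫ x, ∑' i : ℕ,
          q i * pdext f i (coords e n x) * pdext g i (coords e m x) ∂ν := by
  have ha1 (i : ℕ) : Integrable (a i) ν :=
    ((memLp_two_iff_integrable_sq (ha i).aestronglyMeasurable).2 (ha2 i)).integrable one_le_two
  exact symmetric_integration_by_parts_general ν e q a ha1 hinv hsym n hn f hf m hm g hg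
end

section
/- Let (X, 𝒜, ν) be a probability space and let S : L¹(ν) → L¹(ν) be a linear operator which is positivity preserving (f ≥ 0 ν-a.e. implies Sf ≥ 0 ν-a.e.) and sub-Markovian (S1 ≤ 1 ν-a.e.). Let λ > 0 and let g ∈ L¹(ν) with g ≥ 0 ν-a.e. satisfy (λ/(1+λ)) Sg ≤ g ν-a.e. Then (λ/(1+λ)) S(√g) ≤ √g ν-a.e. -/
open MeasureTheory

/-!
The square root is the lower envelope of affine functions with positive slope: `a ≤ √b` as soon as
`2 q a - q² ≤ b` for all rational `q > 0`. If `h² ≤ g` then `2 q h - g ≤ q²`, a bound by a constant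
which a sub-Markovian operator `T` preserves. Running over the countably many `q` gives
`T h ≤ √(T g)`, and `√(T g) ≤ √g` when `T g ≤ g`; this is applied to `T = (λ / (1 + λ)) S`.
-/

open scoped ENNReal

theorem le_sqrt_of_forall_rat_pos {a b : ℝ}
    (hab : ∀ q : ℚ, 0 < q → 2 * q * a - b ≤ (q : ℝ) ^ 2) : a ≤ √b := by
  by_contra! hlt
  obtain ⟨q, hbq, hqa⟩ := exists_rat_btwn hlt
  have hq : (0 : ℝ) < q := (Real.sqrt_nonneg b).trans_lt hbq
  have hqb : (q : ℝ) ^ 2 < b := by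
    nlinarith [hab q (mod_cast hq), mul_lt_mul_of_pos_left hqa hq]
  exact hbq.not_gt ((Real.lt_sqrt hq.le).2 hqb)

section SubMarkovian

variable {X Y : Type*} [MeasurableSpace X] [MeasurableSpace Y] {μ : Measure X} {ν : Measure Y}
  {p r : ℝ≥0∞}

/-- Sub-Markovian operators between `Lᵖ` spaces. The condition does not mention the constant `1` as
an element of `Lᵖ`, so that it makes sense for infinite measures. As `f` need not be nonnegative,
positivity is included: if `f ≤ 0`, then `n f ≤ 1` for all `n`, whence `T f ≤ 1 / n`. -/
def IsSubMarkovian (T : Lp ℝ p μ →ₗ[ℝ] Lp ℝ r ν) : Prop :=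
  ∀ f : Lp ℝ p μ, (∀ᵐ x ∂μ, f x ≤ 1) → ∀ᵐ y ∂ν, T f y ≤ 1

theorem isSubMarkovian_of_nonneg_of_one [IsFiniteMeasure μ] {T : Lp ℝ p μ →ₗ[ℝ] Lp ℝ r ν}
    (hpos : ∀ f : Lp ℝ p μ, (∀ᵐ x ∂μ, 0 ≤ f x) → ∀ᵐ y ∂ν, 0 ≤ T f y)
    (hone : ∀ f : Lp ℝ p μ, (∀ᵐ x ∂μ, f x = 1) → ∀ᵐ y ∂ν, T f y ≤ 1) :
    IsSubMarkovian T := by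
  intro f hf
  set e : Lp ℝ p μ := Lp.const p μ 1
  have he : ∀ᵐ x ∂μ, e x = 1 := Lp.coeFn_const ..
  have hef : ∀ᵐ x ∂μ, 0 ≤ (e - f) x := by
    filter_upwards [hf, he, Lp.coeFn_sub e f] with x hfx hex hsub
    rw [hsub, Pi.sub_apply, hex]
    exact sub_nonneg.2 hfx
  have hTef : ∀ᵐ y ∂ν, 0 ≤ (T e - T f) y := map_sub T e f ▸ hpos (e - f) hef
  filter_upwards [hTef, hone e he, Lp.coeFn_sub (T e) (T f)] with y hy hey hsub
  rw [hsub, Pi.sub_apply] at hy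
  exact (sub_nonneg.1 hy).trans hey

namespace IsSubMarkovian

variable {T : Lp ℝ p μ →ₗ[ℝ] Lp ℝ r ν}

theorem smul (hT : IsSubMarkovian T) {c : ℝ} (hc0 : 0 ≤ c) (hc1 : c ≤ 1) :
    IsSubMarkovian (c • T) := by
  intro f hf
  filter_upwards [hT f hf, Lp.coeFn_smul c (T f)] with y hy hsmul
  rw [LinearMap.smul_apply, hsmul, Pi.smul_apply, smul_eq_mul]
  exact (mul_le_of_le_one_right hc0 hy).trans hc1

theorem map_le_const (hT : IsSubMarkovian T) {c : ℝ} (hc : 0 < c) {f : Lp ℝ p μ}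
    (hf : ∀ᵐ x ∂μ, f x ≤ c) : ∀ᵐ y ∂ν, T f y ≤ c := by
  have hscaled : ∀ᵐ x ∂μ, (c⁻¹ • f) x ≤ 1 := by
    filter_upwards [hf, Lp.coeFn_smul c⁻¹ f] with x hx hsmul
    rwa [hsmul, Pi.smul_apply, smul_eq_mul, inv_mul_le_one₀ hc]
  filter_upwards [hT _ hscaled, Lp.coeFn_smul c⁻¹ (T f)] with y hy hsmul
  rwa [map_smul, hsmul, Pi.smul_apply, smul_eq_mul, inv_mul_le_one₀ hc] at hy

theorem map_le_sqrt_map (hT : IsSubMarkovian T) {g h : Lp ℝ p μ}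
    (hgh : ∀ᵐ x ∂μ, h x ^ 2 ≤ g x) : ∀ᵐ y ∂ν, T h y ≤ √(T g y) := by
  have tangent (q : ℚ) (hq : 0 < q) :
      ∀ᵐ y ∂ν, 2 * q * T h y - T g y ≤ (q : ℝ) ^ 2 := by
    have hle : ∀ᵐ x ∂μ, ((2 * q : ℝ) • h - g) x ≤ (q : ℝ) ^ 2 := by
      filter_upwards [hgh, Lp.coeFn_sub ((2 * q : ℝ) • h) g, Lp.coeFn_smul (2 * q : ℝ) h]
        with x hx hsub hsmul
      rw [hsub, Pi.sub_apply, hsmul, Pi.smul_apply, smul_eq_mul]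
      linarith [two_mul_le_add_sq (q : ℝ) (h x)]
    filter_upwards [hT.map_le_const (by positivity) hle,
      Lp.coeFn_sub ((2 * q : ℝ) • T h) (T g), Lp.coeFn_smul (2 * q : ℝ) (T h)] with y hy hsub hsmul
    rwa [map_sub, map_smul, hsub, Pi.sub_apply, hsmul, Pi.smul_apply, smul_eq_mul] at hy
  filter_upwards [ae_all_iff.2 fun q ↦ Filter.eventually_imp_distrib_left.2 (tangent q)] with y hy
  exact le_sqrt_of_forall_rat_pos hy

end IsSubMarkovian

end SubMarkovian

theorem sqrt_of_excessive_is_excessive_general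
    {X : Type*} [MeasurableSpace X] {ν : Measure X} {p : ℝ≥0∞}
    {S : Lp ℝ p ν →ₗ[ℝ] Lp ℝ p ν} (hS : IsSubMarkovian S)
    {c : ℝ} (hc0 : 0 ≤ c) (hc1 : c ≤ 1)
    {g : Lp ℝ p ν} (hg0 : ∀ᵐ x ∂ν, 0 ≤ g x) (hexc : ∀ᵐ x ∂ν, c * S g x ≤ g x)
    {h : Lp ℝ p ν} (hh : ∀ᵐ x ∂ν, h x = √(g x)) :
    ∀ᵐ x ∂ν, c * S h x ≤ √(g x) := by
  have hsq : ∀ᵐ x ∂ν, h x ^ 2 ≤ g x := by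
    filter_upwards [hg0, hh] with x hgx hhx
    rw [hhx, Real.sq_sqrt hgx]
  filter_upwards [(hS.smul hc0 hc1).map_le_sqrt_map hsq, hexc, Lp.coeFn_smul c (S g),
    Lp.coeFn_smul c (S h)] with x hx hexcx hSg hSh
  rw [LinearMap.smul_apply, LinearMap.smul_apply, hSg, hSh, Pi.smul_apply, Pi.smul_apply,
    smul_eq_mul, smul_eq_mul] at hx
  exact hx.trans (Real.sqrt_le_sqrt hexcx)

/-- If `S` is a positivity preserving sub-Markovian linear operator on
`L¹(ν)` over a probability space, `λ > 0`, and `g ∈ L¹(ν)` is a.e. nonnegative with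
`(λ/(1+λ)) S g ≤ g` a.e., then `(λ/(1+λ)) S(√g) ≤ √g` a.e. -/
theorem sqrt_of_excessive_is_excessive
    {X : Type*} [MeasurableSpace X] (ν : Measure X) [IsProbabilityMeasure ν]
    (S : Lp ℝ 1 ν →ₗ[ℝ] Lp ℝ 1 ν)
    (hpos : ∀ f : Lp ℝ 1 ν, (∀ᵐ x ∂ν, 0 ≤ f x) → (∀ᵐ x ∂ν, 0 ≤ S f x))
    (hsub : ∀ f : Lp ℝ 1 ν, (∀ᵐ x ∂ν, f x = 1) → (∀ᵐ x ∂ν, S f x ≤ 1))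
    (lam : ℝ) (hlam : 0 < lam)
    (g : Lp ℝ 1 ν) (hg0 : ∀ᵐ x ∂ν, 0 ≤ g x)
    (hexc : ∀ᵐ x ∂ν, (lam / (1 + lam)) * S g x ≤ g x)
    (h : Lp ℝ 1 ν) (hh : ∀ᵐ x ∂ν, h x = Real.sqrt (g x)) :
    ∀ᵐ x ∂ν, (lam / (1 + lam)) * S h x ≤ Real.sqrt (g x) :=
  sqrt_of_excessive_is_excessive_general (isSubMarkovian_of_nonneg_of_one hpos hsub)
    (by positivity) (div_le_one_of_le₀ (by linarith) (by positivity)) hg0 hexc hh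
end
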